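/- arXiv:2008.06200 — 6 statements merged into one kernel-verified Lean document; each statement's English description precedes it below -/
import Mathlib

section
/- For every real s > 1, the function f(p) = (-ln p)^(s-1) / (ζ(s) Γ(s) (1-p)) is nonnegative on (0,1) and satisfies ∫₀¹ f(p) dp = 1; i.e., it is a genuine probability density function on (0,1). -/
open MeasureTheory

/-- The Riemann zeta function for real `s > 1`, defined as `∑_{x=0}^∞ (x+1)^(-s)`. -/
noncomputable def zetaS (s : ℝ) : ℝ := ∑' x : ℕ, ((x : ℝ) + 1) ^ (-s)

/-!
Expanding `1 / (1 - p) = ∑ pⁿ` reduces the integral of `(-log p) ^ (s - 1) / (1 - p)` to the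
logarithmic moments `∫₀¹ pⁿ (-log p) ^ (s - 1) dp`. The substitution `p = exp (-t)` turns each
moment into Euler's integral for `Γ(s)`, rescaled to `(n + 1) ^ (-s) Γ(s)`; summing over `n` gives
`ζ(s) Γ(s)`.
-/

open Set

section ExpNegSubstitution

lemma image_exp_neg_Ioi (a : ℝ) :
    (fun t : ℝ ↦ Real.exp (-t)) '' Ioi a = Ioo 0 (Real.exp (-a)) := by
  rw [← Real.image_exp_Iio, ← image_neg_Ioi, image_image]

lemma integral_Ioi_exp_neg_smul_comp_exp_neg {E : Type*} [NormedAddCommGroup E]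
    [NormedSpace ℝ E] (g : ℝ → E) (a : ℝ) :
    ∫ t in Ioi a, Real.exp (-t) • g (Real.exp (-t)) = ∫ p in Ioo 0 (Real.exp (-a)), g p := by
  have hderiv (t : ℝ) (_ : t ∈ Ioi a) :
      HasDerivWithinAt (fun t ↦ Real.exp (-t)) (-Real.exp (-t)) (Ioi a) t := by
    simpa using (hasDerivAt_neg t).exp.hasDerivWithinAt
  have hanti : AntitoneOn (fun t : ℝ ↦ Real.exp (-t)) (Ioi a) :=
    fun t _ u _ htu ↦ Real.exp_le_exp.2 (neg_le_neg htu)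
  simpa only [image_exp_neg_Ioi, neg_neg] using
    (integral_image_eq_integral_deriv_smul_of_antitoneOn measurableSet_Ioi hderiv hanti g).symm

end ExpNegSubstitution

section LogMoments

variable {b s p : ℝ}

lemma neg_log_rpow_nonneg_of_mem_Ioo (hp : p ∈ Ioo (0 : ℝ) 1) (s : ℝ) : 0 ≤ (-Real.log p) ^ s :=
  Real.rpow_nonneg (neg_nonneg.2 (Real.log_nonpos hp.1.le hp.2.le)) s

lemma integral_Ioo_rpow_mul_neg_log_rpow (hb : 0 < b) (hs : 0 < s) :
    ∫ p in Ioo (0 : ℝ) 1, p ^ (b - 1) * (-Real.log p) ^ (s - 1) = b ^ (-s) * Real.Gamma s := by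
  have hexp (t : ℝ) : Real.exp (-t) * Real.exp (-t) ^ (b - 1) = Real.exp (-(b * t)) := by
    rw [← Real.exp_mul, ← Real.exp_add]
    ring_nf
  calc ∫ p in Ioo (0 : ℝ) 1, p ^ (b - 1) * (-Real.log p) ^ (s - 1)
    _ = ∫ t in Ioi (0 : ℝ), Real.exp (-t) •
          (Real.exp (-t) ^ (b - 1) * (-Real.log (Real.exp (-t))) ^ (s - 1)) := by
      rw [integral_Ioi_exp_neg_smul_comp_exp_neg
        (fun p ↦ p ^ (b - 1) * (-Real.log p) ^ (s - 1)), neg_zero, Real.exp_zero]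
    _ = ∫ t in Ioi (0 : ℝ), t ^ (s - 1) * Real.exp (-(b * t)) := by
      simp only [smul_eq_mul, ← mul_assoc, hexp, Real.log_exp, neg_neg]
      simp only [mul_comm]
    _ = b ^ (-s) * Real.Gamma s := by
      rw [Real.integral_rpow_mul_exp_neg_mul_Ioi hs hb, one_div, Real.inv_rpow hb.le,
        Real.rpow_neg hb.le]

lemma integrableOn_Ioo_rpow_mul_neg_log_rpow (hb : 0 < b) (hs : 0 < s) :
    IntegrableOn (fun p ↦ p ^ (b - 1) * (-Real.log p) ^ (s - 1)) (Ioo (0 : ℝ) 1) := by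
  refine .of_integral_ne_zero ?_
  rw [integral_Ioo_rpow_mul_neg_log_rpow hb hs]
  exact (mul_pos (Real.rpow_pos_of_pos hb _) (Real.Gamma_pos_of_pos hs)).ne'

end LogMoments

section GeometricExpansion

variable {b s p : ℝ}

lemma summable_nat_add_rpow_neg (hb : 0 ≤ b) (hs : 1 < s) :
    Summable fun n : ℕ ↦ ((n : ℝ) + b) ^ (-s) := by
  refine ((Real.summable_one_div_nat_add_rpow b s).2 hs).congr fun n ↦ ?_
  have hnb : 0 ≤ (n : ℝ) + b := by positivity
  rw [abs_of_nonneg hnb, Real.rpow_neg hnb, one_div]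

lemma hasSum_rpow_nat_add_sub_one (hp : p ∈ Ioo (0 : ℝ) 1) (b : ℝ) :
    HasSum (fun n : ℕ ↦ p ^ ((n : ℝ) + b - 1)) (p ^ (b - 1) / (1 - p)) := by
  refine ((hasSum_geometric_of_lt_one hp.1.le hp.2).mul_left (p ^ (b - 1))).congr_fun fun n ↦ ?_
  rw [add_sub_assoc, Real.rpow_add hp.1, Real.rpow_natCast, mul_comm]

theorem hasSum_integral_Ioo_rpow_mul_neg_log_rpow_div_one_sub (hb : 0 < b) (hs : 1 < s) :
    HasSum (fun n : ℕ ↦ ((n : ℝ) + b) ^ (-s) * Real.Gamma s)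
      (∫ p in Ioo (0 : ℝ) 1, p ^ (b - 1) * (-Real.log p) ^ (s - 1) / (1 - p)) := by
  have hs₀ : 0 < s := one_pos.trans hs
  have hnb (n : ℕ) : 0 < (n : ℝ) + b := by positivity
  let F (n : ℕ) (p : ℝ) : ℝ := p ^ ((n : ℝ) + b - 1) * (-Real.log p) ^ (s - 1)
  have hF_integral (n : ℕ) :
      ∫ p in Ioo (0 : ℝ) 1, F n p = ((n : ℝ) + b) ^ (-s) * Real.Gamma s :=
    integral_Ioo_rpow_mul_neg_log_rpow (hnb n) hs₀
  have hF_norm (n : ℕ) : ∫ p in Ioo (0 : ℝ) 1, ‖F n p‖ = ∫ p in Ioo (0 : ℝ) 1, F n p :=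
    setIntegral_congr_fun measurableSet_Ioo fun p hp ↦ Real.norm_of_nonneg <|
      mul_nonneg (Real.rpow_nonneg hp.1.le _) (neg_log_rpow_nonneg_of_mem_Ioo hp _)
  have hF_tsum : ∫ p in Ioo (0 : ℝ) 1, ∑' n, F n p =
      ∫ p in Ioo (0 : ℝ) 1, p ^ (b - 1) * (-Real.log p) ^ (s - 1) / (1 - p) := by
    refine setIntegral_congr_fun measurableSet_Ioo fun p hp ↦ ?_
    simp only [F, ((hasSum_rpow_nat_add_sub_one hp b).mul_right _).tsum_eq, div_mul_eq_mul_div]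
  have hF_summable : Summable fun n ↦ ∫ p in Ioo (0 : ℝ) 1, ‖F n p‖ := by
    simpa only [hF_norm, hF_integral] using (summable_nat_add_rpow_neg hb.le hs).mul_right _
  have hF_integrable (n : ℕ) : IntegrableOn (F n) (Ioo (0 : ℝ) 1) :=
    integrableOn_Ioo_rpow_mul_neg_log_rpow (hnb n) hs₀
  simpa only [hF_integral, hF_tsum] using
    hasSum_integral_of_summable_integral_norm hF_integrable hF_summable

end GeometricExpansion

section Zeta

variable {s : ℝ}

lemma zetaS_pos (hs : 1 < s) : 0 < zetaS s :=
  (summable_nat_add_rpow_neg zero_le_one hs).tsum_pos (fun n ↦ by positivity) 0 (by positivity)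

lemma integral_Ioo_neg_log_rpow_div_one_sub (hs : 1 < s) :
    ∫ p in Ioo (0 : ℝ) 1, (-Real.log p) ^ (s - 1) / (1 - p) = zetaS s * Real.Gamma s := by
  simpa only [sub_self, Real.rpow_zero, one_mul, tsum_mul_right, zetaS] using
    (hasSum_integral_Ioo_rpow_mul_neg_log_rpow_div_one_sub one_pos hs).tsum_eq.symm

end Zeta

/-- The mixing density `f(p) = (-ln p)^(s-1) / (ζ(s) Γ(s) (1-p))` is a genuine
probability density on `(0,1)`: it is nonnegative there and integrates to 1. -/
theorem geometric_mixing_density_is_pdf (s : ℝ) (hs : 1 < s) :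
    (∀ p ∈ Set.Ioo (0 : ℝ) 1,
        0 ≤ (-Real.log p) ^ (s - 1) / (zetaS s * Real.Gamma s * (1 - p))) ∧
    ∫ p in Set.Ioo (0 : ℝ) 1,
        (-Real.log p) ^ (s - 1) / (zetaS s * Real.Gamma s * (1 - p)) = 1 := by
  have hc : 0 < zetaS s * Real.Gamma s :=
    mul_pos (zetaS_pos hs) (Real.Gamma_pos_of_pos (one_pos.trans hs))
  refine ⟨fun p hp ↦ div_nonneg (neg_log_rpow_nonneg_of_mem_Ioo hp _)
    (mul_nonneg hc.le (sub_nonneg.2 hp.2.le)), ?_⟩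
  simp only [div_mul_eq_div_div_swap _ (zetaS s * Real.Gamma s)]
  rw [integral_div, integral_Ioo_neg_log_rpow_div_one_sub hs, div_self hc.ne']
end

section
/- For every real s > 1 and every real t, the moment-generating function of the mixing density f(p) = (-ln p)^(s-1) / (ζ(s) Γ(s) (1-p)) on (0,1) satisfies ∫₀¹ e^{tp} f(p) dp = Σ_{n=0}^∞ (t^n / n!) · ζ(s, n+1)/ζ(s), where ζ(s, n+1) = Σ_{i=n}^∞ (i+1)^(-s) is the Hurwitz zeta function; in particular, this series converges for every real t. -/
open MeasureTheory

/-- The Hurwitz zeta function `ζ(s, n+1) = ∑_{i=n}^∞ (i+1)^(-s)`. -/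
noncomputable def hurwitzS (s : ℝ) (n : ℕ) : ℝ := ∑' i : ℕ, ((n : ℝ) + (i : ℝ) + 1) ^ (-s)

/-!
The `n`-th moment of `f` is `ζ(s, n+1) / ζ(s)`: expanding `1 / (1 - p)` as a geometric series
leaves the integrals `∫₀¹ p^(n+i) (-ln p)^(s-1) dp`, and the substitution `p = e^(-u)` turns each
of them into the Gamma integral `Γ(s) (n+i+1)^(-s)`. Since `p` is bounded on `(0, 1)` and `f` is
integrable there, the series of `e^(tp)` can be integrated term by term against `f`.
-/

open Set Real
open scoped Nat

section

variable {E : Type*} [NormedAddCommGroup E] [NormedSpace ℝ E]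

theorem hasSum_pow_div_factorial_smul_integral {α : Type*} [MeasurableSpace α] {μ : Measure α}
    {X : α → ℝ} {f : α → E} {C : ℝ} (hX : AEStronglyMeasurable X μ) (hXC : ∀ᵐ x ∂μ, ‖X x‖ ≤ C)
    (hf : Integrable f μ) (t : ℝ) :
    HasSum (fun n : ℕ => (t ^ n / n !) • ∫ x, X x ^ n • f x ∂μ)
      (∫ x, exp (t * X x) • f x ∂μ) := by
  have hasSum_exp (y : ℝ) : HasSum (fun n : ℕ => y ^ n / n !) (exp y) := by
    rw [exp_eq_exp_ℝ]
    exact NormedSpace.expSeries_div_hasSum_exp y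
  simp_rw [← integral_smul, smul_smul]
  refine hasSum_integral_of_dominated_convergence (fun n x => (|t| * C) ^ n / n ! * ‖f x‖)
    (fun n => ((hX.pow n).const_mul _).smul hf.aestronglyMeasurable) (fun n => ?_) ?_ ?_ ?_
  · filter_upwards [hXC] with x hx
    rw [norm_smul, norm_mul, norm_div, norm_pow, norm_pow, Real.norm_natCast, Real.norm_eq_abs t,
      mul_pow, mul_div_right_comm]
    gcongr
  · exact .of_forall fun x => (summable_pow_div_factorial _).mul_right _
  · simp_rw [tsum_mul_right]
    exact hf.norm.const_mul _
  · refine .of_forall fun x => ?_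
    simpa only [mul_pow, mul_div_right_comm] using (hasSum_exp (t * X x)).smul_const (f x)

theorem integral_Ioo_zero_one_eq_integral_Ioi_exp_neg (g : ℝ → E) :
    ∫ p in Ioo (0 : ℝ) 1, g p = ∫ u in Ioi (0 : ℝ), exp (-u) • g (exp (-u)) := by
  have image_exp_neg : (fun u : ℝ => exp (-u)) '' Ioi 0 = Ioo 0 1 := by
    rw [← image_image exp, image_neg_Ioi, neg_zero, image_exp_Iio, exp_zero]
  rw [← image_exp_neg, integral_image_eq_integral_abs_deriv_smul (f' := fun u => -exp (-u))
    measurableSet_Ioi]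
  · simp_rw [abs_neg, abs_exp]
  · intro u _
    simpa using (hasDerivAt_neg u).exp.hasDerivWithinAt
  · exact (exp_injective.comp neg_injective).injOn

end

theorem integral_rpow_mul_neg_log_rpow {a s : ℝ} (ha : 0 < a) (hs : 0 < s) :
    ∫ p in Ioo (0 : ℝ) 1, p ^ (a - 1) * (-log p) ^ (s - 1) = a ^ (-s) * Gamma s := by
  calc ∫ p in Ioo (0 : ℝ) 1, p ^ (a - 1) * (-log p) ^ (s - 1)
    _ = ∫ u in Ioi (0 : ℝ), u ^ (s - 1) * exp (-(a * u)) := by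
      rw [integral_Ioo_zero_one_eq_integral_Ioi_exp_neg]
      congr with u
      rw [← exp_mul, log_exp, neg_neg, smul_eq_mul, ← mul_assoc, ← exp_add, mul_comm]
      ring_nf
    _ = a ^ (-s) * Gamma s := by
      rw [integral_rpow_mul_exp_neg_mul_Ioi hs ha, one_div, inv_rpow ha.le, rpow_neg ha.le]

theorem integrableOn_rpow_mul_neg_log_rpow {a s : ℝ} (ha : 0 < a) (hs : 0 < s) :
    IntegrableOn (fun p : ℝ => p ^ (a - 1) * (-log p) ^ (s - 1)) (Ioo 0 1) := by
  refine .of_integral_ne_zero ?_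
  rw [integral_rpow_mul_neg_log_rpow ha hs]
  exact (mul_pos (rpow_pos_of_pos ha _) (Gamma_pos_of_pos hs)).ne'

theorem summable_add_natCast_rpow_neg {a s : ℝ} (ha : 0 < a) (hs : 1 < s) :
    Summable (fun i : ℕ => (a + i) ^ (-s)) := by
  refine ((summable_one_div_nat_add_rpow a s).2 hs).congr fun i => ?_
  have hai : 0 < a + i := by positivity
  rw [add_comm, abs_of_pos hai, rpow_neg hai.le, one_div]

theorem hasSum_add_natCast_rpow_neg_mul_Gamma {a s : ℝ} (ha : 0 < a) (hs : 1 < s) :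
    HasSum (fun i : ℕ => (a + i) ^ (-s) * Gamma s)
      (∫ p in Ioo (0 : ℝ) 1, p ^ (a - 1) * ((-log p) ^ (s - 1) / (1 - p))) := by
  have hs₀ : 0 < s := by linarith
  have hai (i : ℕ) : 0 < a + i := by positivity
  have integral_norm_term (i : ℕ) : ∫ p in Ioo (0 : ℝ) 1, ‖p ^ (a + i - 1) * (-log p) ^ (s - 1)‖ =
      (a + i) ^ (-s) * Gamma s := by
    rw [← integral_rpow_mul_neg_log_rpow (hai i) hs₀]
    refine setIntegral_congr_fun measurableSet_Ioo fun p ⟨hp₀, hp₁⟩ => norm_of_nonneg ?_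
    have := log_neg hp₀ hp₁
    exact mul_nonneg (rpow_nonneg hp₀.le _) (rpow_nonneg (by linarith) _)
  have tsum_term {p : ℝ} (hp : p ∈ Ioo 0 1) :
      ∑' i : ℕ, p ^ (a + i - 1) * (-log p) ^ (s - 1) =
        p ^ (a - 1) * ((-log p) ^ (s - 1) / (1 - p)) := by
    simp_rw [add_sub_right_comm, rpow_add hp.1, rpow_natCast, tsum_mul_right, tsum_mul_left,
      tsum_geometric_of_lt_one hp.1.le hp.2]
    ring
  have hsum := hasSum_integral_of_summable_integral_norm
    (fun i : ℕ => integrableOn_rpow_mul_neg_log_rpow (hai i) hs₀)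
    (by simpa only [integral_norm_term] using (summable_add_natCast_rpow_neg ha hs).mul_right _)
  simp_rw [integral_rpow_mul_neg_log_rpow (hai _) hs₀] at hsum
  rwa [setIntegral_congr_fun measurableSet_Ioo fun p hp => tsum_term hp] at hsum

theorem integrableOn_rpow_mul_neg_log_rpow_div_one_sub {a s : ℝ} (ha : 0 < a) (hs : 1 < s) :
    IntegrableOn (fun p : ℝ => p ^ (a - 1) * ((-log p) ^ (s - 1) / (1 - p))) (Ioo 0 1) := by
  have hΓ : 0 < Gamma s := Gamma_pos_of_pos (by linarith)
  have hsum := hasSum_add_natCast_rpow_neg_mul_Gamma ha hs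
  refine .of_integral_ne_zero (hsum.tsum_eq ▸ ?_)
  exact (hsum.summable.tsum_pos (fun i => by positivity) 0 (mul_pos (by positivity) hΓ)).ne'

/-- The density `f(p)` which mixes the laws Geometric(`p`) into the law Zeta(`s`). It is meant for
`1 < s` and `0 < p < 1`, and is not truncated to `0` outside `(0, 1)`. -/
noncomputable def zetaMixingDensity (s p : ℝ) : ℝ :=
  (-log p) ^ (s - 1) / (zetaS s * Gamma s * (1 - p))

theorem zetaMixingDensity_eq_mul (s p : ℝ) :
    zetaMixingDensity s p = (zetaS s * Gamma s)⁻¹ * ((-log p) ^ (s - 1) / (1 - p)) := by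
  rw [zetaMixingDensity, div_mul_eq_div_div, div_right_comm, div_eq_inv_mul]

theorem integrableOn_zetaMixingDensity {s : ℝ} (hs : 1 < s) :
    IntegrableOn (zetaMixingDensity s) (Ioo 0 1) := by
  have h := integrableOn_rpow_mul_neg_log_rpow_div_one_sub one_pos hs
  simp only [sub_self, rpow_zero, one_mul] at h
  simpa only [IntegrableOn, funext (zetaMixingDensity_eq_mul s)] using h.const_mul _

theorem integral_pow_mul_zetaMixingDensity {s : ℝ} (hs : 1 < s) (n : ℕ) :
    ∫ p in Ioo (0 : ℝ) 1, p ^ n * zetaMixingDensity s p = hurwitzS s n / zetaS s := by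
  have hΓ : Gamma s ≠ 0 := (Gamma_pos_of_pos (by linarith)).ne'
  have hsum := hasSum_add_natCast_rpow_neg_mul_Gamma (a := n + 1) (by positivity) hs
  simp_rw [add_sub_cancel_right, rpow_natCast, add_right_comm] at hsum
  simp_rw [zetaMixingDensity_eq_mul, mul_left_comm (_ ^ n), integral_const_mul]
  rw [← hsum.tsum_eq, tsum_mul_right, ← hurwitzS, ← div_eq_inv_mul, mul_div_mul_right _ _ hΓ]

/-- The moment-generating function of the mixing density
`f(p) = (-ln p)^(s-1)/(ζ(s)Γ(s)(1-p))` satisfies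
`∫₀¹ e^{tp} f(p) dp = ∑_{n=0}^∞ (t^n/n!) ζ(s,n+1)/ζ(s)`, the series
converging for every real `t`. -/
theorem geometric_mixing_density_mgf (s : ℝ) (hs : 1 < s) (t : ℝ) :
    Summable (fun n : ℕ => t ^ n / (Nat.factorial n : ℝ) * (hurwitzS s n / zetaS s)) ∧
    ∫ p in Set.Ioo (0 : ℝ) 1,
        Real.exp (t * p) *
          ((-Real.log p) ^ (s - 1) / (zetaS s * Real.Gamma s * (1 - p)))
      = ∑' n : ℕ, t ^ n / (Nat.factorial n : ℝ) * (hurwitzS s n / zetaS s) := by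
  have norm_le_one : ∀ᵐ p ∂volume.restrict (Ioo (0 : ℝ) 1), ‖p‖ ≤ 1 :=
    ae_restrict_of_forall_mem measurableSet_Ioo fun p hp =>
      abs_le.2 ⟨by linarith [hp.1], hp.2.le⟩
  have hsum := hasSum_pow_div_factorial_smul_integral aestronglyMeasurable_id norm_le_one
    (integrableOn_zetaMixingDensity hs) t
  simp only [id, smul_eq_mul, integral_pow_mul_zetaMixingDensity hs] at hsum
  exact ⟨hsum.summable, hsum.tsum_eq.symm⟩
end

section
/- For every real s > 1, every real r with 0 < r < 1, and every natural number x, ∫₀¹ [Γ(r+x)/(Γ(r)Γ(x+1))] p^x (1-p)^r · f(p) dp = (x+1)^(-s)/ζ(s), where f(p) = (1/(ζ(s)Γ(s)(1-p)^r)) · [ (s-1) ∫_p^1 (ω-p)^(r-1) (-ln ω)^(s-2) / ω^r dω + (r-1) ∫_p^1 (ω-p)^(r-1) (-ln ω)^(s-1) / ω^r dω ]. That is, the Zeta(s) probability mass function is the continuous mixture of Negative Binomial(r,p) probability mass functions, for fixed r ∈ (0,1), with mixing quasi-density f. -/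
open MeasureTheory

/-!
The inner integrals of the mixing density are Erdélyi–Kober transforms of powers of `-log`.
Such a transform acts on moments as multiplication by a Beta function:
`∫₀¹ p ^ (α - 1) (∫_p^1 (ω - p) ^ (r - 1) g(ω) / ω ^ r dω) dp = B(α, r) ∫₀¹ ω ^ (α - 1) g(ω) dω`,
by Fubini on the triangle `p < ω`. For `g = (-log) ^ (a - 1)` the right-hand moment is
`α ^ (-a) Γ(a)`, so with `α = x + 1` the two terms, taken at `a = s - 1` and `a = s`, add up to
`(α + r - 1) B(α, r) α ^ (-s) Γ(s)`, whose Beta factor cancels the binomial coefficient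
`Γ(r + x) / (Γ(r) Γ(x + 1))`.
-/

open Set ProbabilityTheory

section Triangle

variable {α E : Type*} [LinearOrder α] [TopologicalSpace α] [OrderClosedTopology α]
  [MeasurableSpace α] [OpensMeasurableSpace α] [NormedAddCommGroup E]
  {μ ν : Measure α} {a b : α} {f : α × α → E}

theorem restrict_Ioo_restrict_Iio {ω : α} (hω : ω ≤ b) :
    (μ.restrict (Ioo a b)).restrict (Iio ω) = μ.restrict (Ioo a ω) := by
  rw [Measure.restrict_restrict measurableSet_Iio, Iio_inter_Ioo, min_eq_left hω]

theorem restrict_Ioo_restrict_Ioi {p : α} (hp : a ≤ p) :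
    (μ.restrict (Ioo a b)).restrict (Ioi p) = μ.restrict (Ioo p b) := by
  rw [Measure.restrict_restrict measurableSet_Ioi, inter_comm, Ioo_inter_Ioi, max_eq_right hp]

theorem integral_indicator_lt_right [NormedSpace ℝ E] {p : α} (hp : a ≤ p) :
    ∫ ω in Ioo a b, {z : α × α | z.1 < z.2}.indicator f (p, ω) ∂ν =
      ∫ ω in Ioo p b, f (p, ω) ∂ν := by
  change ∫ ω in Ioo a b, (Ioi p).indicator (fun ω ↦ f (p, ω)) ω ∂ν = _
  rw [integral_indicator measurableSet_Ioi, restrict_Ioo_restrict_Ioi hp]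

theorem integral_indicator_lt_left [NormedSpace ℝ E] {ω : α} (hω : ω ≤ b) :
    ∫ p in Ioo a b, {z : α × α | z.1 < z.2}.indicator f (p, ω) ∂μ =
      ∫ p in Ioo a ω, f (p, ω) ∂μ := by
  change ∫ p in Ioo a b, (Iio ω).indicator (fun p ↦ f (p, ω)) p ∂μ = _
  rw [integral_indicator measurableSet_Iio, restrict_Ioo_restrict_Iio hω]

variable [SecondCountableTopology α]

theorem integrableOn_triangle [SFinite μ] [SFinite ν]
    (hf : AEStronglyMeasurable f ((μ.restrict (Ioo a b)).prod (ν.restrict (Ioo a b))))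
    (hslice : ∀ ω ∈ Ioo a b, IntegrableOn (fun p ↦ f (p, ω)) (Ioo a ω) μ)
    (hnorm : IntegrableOn (fun ω ↦ ∫ p in Ioo a ω, ‖f (p, ω)‖ ∂μ) (Ioo a b) ν) :
    IntegrableOn f {z | z.1 < z.2} ((μ.restrict (Ioo a b)).prod (ν.restrict (Ioo a b))) := by
  rw [← integrable_indicator_iff measurableSet_lt',
    integrable_prod_iff' (hf.indicator measurableSet_lt')]
  refine ⟨ae_restrict_of_forall_mem measurableSet_Ioo fun ω hω ↦ ?_,
    hnorm.congr_fun (fun ω hω ↦ ?_) measurableSet_Ioo⟩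
  · change Integrable ((Iio ω).indicator fun p ↦ f (p, ω)) (μ.restrict (Ioo a b))
    rw [integrable_indicator_iff measurableSet_Iio, IntegrableOn, restrict_Ioo_restrict_Iio hω.2.le]
    exact hslice ω hω
  · change _ = ∫ p in Ioo a b, ‖(Iio ω).indicator (fun p ↦ f (p, ω)) p‖ ∂μ
    simp only [norm_indicator_eq_indicator_norm]
    rw [integral_indicator measurableSet_Iio, restrict_Ioo_restrict_Iio hω.2.le]

theorem integrableOn_integral_of_integrableOn_triangle [NormedSpace ℝ E] [SFinite ν]
    (hf : IntegrableOn f {z | z.1 < z.2}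
      ((μ.restrict (Ioo a b)).prod (ν.restrict (Ioo a b)))) :
    IntegrableOn (fun p ↦ ∫ ω in Ioo p b, f (p, ω) ∂ν) (Ioo a b) μ :=
  IntegrableOn.congr_fun (hf.integrable_indicator measurableSet_lt').integral_prod_left
    (fun _ hp ↦ integral_indicator_lt_right hp.1.le) measurableSet_Ioo

theorem integral_integral_swap_triangle [NormedSpace ℝ E] [SFinite μ] [SFinite ν]
    (hf : IntegrableOn f {z | z.1 < z.2}
      ((μ.restrict (Ioo a b)).prod (ν.restrict (Ioo a b)))) :
    ∫ p in Ioo a b, ∫ ω in Ioo p b, f (p, ω) ∂ν ∂μ =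
      ∫ ω in Ioo a b, ∫ p in Ioo a ω, f (p, ω) ∂μ ∂ν := by
  let F : α → α → E := fun p ω ↦ {z : α × α | z.1 < z.2}.indicator f (p, ω)
  calc
    _ = ∫ p in Ioo a b, ∫ ω in Ioo a b, F p ω ∂ν ∂μ :=
      setIntegral_congr_fun measurableSet_Ioo fun _ hp ↦ (integral_indicator_lt_right hp.1.le).symm
    _ = ∫ ω in Ioo a b, ∫ p in Ioo a b, F p ω ∂μ ∂ν :=
      integral_integral_swap (hf.integrable_indicator measurableSet_lt')
    _ = _ := setIntegral_congr_fun measurableSet_Ioo fun _ hω ↦ integral_indicator_lt_left hω.2.le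

end Triangle

section Moments

variable {α β a : ℝ}

theorem integral_rpow_mul_sub_rpow (hα : 0 < α) (hβ : 0 < β) {w : ℝ} (hw : 0 < w) :
    ∫ p in Ioo 0 w, p ^ (α - 1) * (w - p) ^ (β - 1) = w ^ (α + β - 1) * beta α β := by
  have hbeta : Complex.betaIntegral α β = beta α β := by
    rw [Complex.betaIntegral_eq_Gamma_mul_div _ _ (by simpa) (by simpa), beta]
    simp only [← Complex.ofReal_add, Complex.Gamma_ofReal, Complex.ofReal_div, Complex.ofReal_mul]
  have hscaled := Complex.betaIntegral_scaled α β hw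
  rw [hbeta, intervalIntegral.integral_of_le hw.le, integral_Ioc_eq_integral_Ioo] at hscaled
  apply Complex.ofReal_injective
  rw [← integral_complex_ofReal, Complex.ofReal_mul, Complex.ofReal_cpow hw.le]
  push_cast
  rw [← hscaled]
  refine setIntegral_congr_fun measurableSet_Ioo fun p hp ↦ ?_
  push_cast [Complex.ofReal_cpow hp.1.le, Complex.ofReal_cpow (sub_nonneg.2 hp.2.le)]
  rfl

theorem integrableOn_rpow_mul_sub_rpow (hα : 0 < α) (hβ : 0 < β) {w : ℝ} (hw : 0 < w) :
    IntegrableOn (fun p ↦ p ^ (α - 1) * (w - p) ^ (β - 1)) (Ioo 0 w) := by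
  refine .of_integral_ne_zero ?_
  rw [integral_rpow_mul_sub_rpow hα hβ hw]
  exact (mul_pos (Real.rpow_pos_of_pos hw _) (beta_pos hα hβ)).ne'

theorem integral_rpow_mul_neg_log_rpow_s11 (hα : 0 < α) (ha : 0 < a) :
    ∫ w in Ioo 0 1, w ^ (α - 1) * (-Real.log w) ^ (a - 1) = α ^ (-a) * Real.Gamma a := by
  have himage : (fun t ↦ Real.exp (-t)) '' Ioi 0 = Ioo 0 1 := by
    rw [← image_image Real.exp Neg.neg]
    simp [Real.image_exp_Iio]
  have hderiv : ∀ t ∈ Ioi (0 : ℝ),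
      HasDerivWithinAt (fun t ↦ Real.exp (-t)) (-Real.exp (-t)) (Ioi 0) t := fun t _ ↦ by
    simpa using (hasDerivAt_id t).neg.exp.hasDerivWithinAt
  have hanti : AntitoneOn (fun t ↦ Real.exp (-t)) (Ioi 0) :=
    fun _ _ _ _ h ↦ Real.exp_le_exp.2 (neg_le_neg h)
  calc
    _ = ∫ t in Ioi 0, - -Real.exp (-t) •
          (Real.exp (-t) ^ (α - 1) * (-Real.log (Real.exp (-t))) ^ (a - 1)) := by
      rw [← himage,
        integral_image_eq_integral_deriv_smul_of_antitoneOn measurableSet_Ioi hderiv hanti]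
    _ = ∫ t in Ioi 0, t ^ (a - 1) * Real.exp (-(α * t)) := by
      refine integral_congr_ae (.of_forall fun t ↦ ?_)
      have hexp : Real.exp (-(α * t)) = Real.exp (-t) * Real.exp (-t) ^ (α - 1) := by
        rw [← Real.exp_mul, ← Real.exp_add]
        ring_nf
      simp only [neg_neg, Real.log_exp, smul_eq_mul, hexp]
      ring
    _ = _ := by
      rw [Real.integral_rpow_mul_exp_neg_mul_Ioi ha hα, one_div, Real.inv_rpow hα.le,
        Real.rpow_neg hα.le]

theorem integrableOn_rpow_mul_neg_log_rpow_s11 (hα : 0 < α) (ha : 0 < a) :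
    IntegrableOn (fun w ↦ w ^ (α - 1) * (-Real.log w) ^ (a - 1)) (Ioo 0 1) := by
  refine .of_integral_ne_zero ?_
  rw [integral_rpow_mul_neg_log_rpow_s11 hα ha]
  exact (mul_pos (Real.rpow_pos_of_pos hα _) (Real.Gamma_pos_of_pos ha)).ne'

end Moments

/-- The right-sided Erdélyi–Kober fractional integral of order `r` of `g` on `(0, b)`, without the
usual factor `1 / Γ(r)`. -/
noncomputable def erdelyiKober (r b : ℝ) (g : ℝ → ℝ) (p : ℝ) : ℝ :=
  ∫ ω in Ioo p b, (ω - p) ^ (r - 1) * g ω / ω ^ r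

section ErdelyiKober

variable {α r b : ℝ} {g : ℝ → ℝ}

theorem integral_rpow_mul_erdelyiKober_kernel (hα : 0 < α) (hr : 0 < r) {ω : ℝ} (hω : 0 < ω)
    (c : ℝ) :
    ∫ p in Ioo 0 ω, p ^ (α - 1) * ((ω - p) ^ (r - 1) * c / ω ^ r) =
      beta α r * (ω ^ (α - 1) * c) := by
  have hωr : ω ^ r ≠ 0 := (Real.rpow_pos_of_pos hω r).ne'
  calc
    _ = ∫ p in Ioo 0 ω, p ^ (α - 1) * (ω - p) ^ (r - 1) * (c / ω ^ r) := by
      simp only [mul_div_assoc, mul_assoc]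
    _ = ω ^ (α - 1 + r) * beta α r * (c / ω ^ r) := by
      rw [integral_mul_const, integral_rpow_mul_sub_rpow hα hr hω, add_sub_right_comm]
    _ = _ := by
      rw [Real.rpow_add hω]
      field_simp

theorem integrableOn_triangle_erdelyiKober (hα : 0 < α) (hr : 0 < r)
    (hg : IntegrableOn (fun ω ↦ ω ^ (α - 1) * g ω) (Ioo 0 b)) :
    IntegrableOn (fun z : ℝ × ℝ ↦ z.1 ^ (α - 1) * ((z.2 - z.1) ^ (r - 1) * g z.2 / z.2 ^ r))
      {z | z.1 < z.2} ((volume.restrict (Ioo 0 b)).prod (volume.restrict (Ioo 0 b))) := by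
  have hg_meas : AEStronglyMeasurable g (volume.restrict (Ioo 0 b)) := by
    have hpow : Measurable fun ω : ℝ ↦ (ω ^ (α - 1))⁻¹ := by fun_prop
    refine (hpow.aestronglyMeasurable.mul hg.1).congr
      (ae_restrict_of_forall_mem measurableSet_Ioo fun ω hω ↦ ?_)
    exact inv_mul_cancel_left₀ (Real.rpow_pos_of_pos hω.1 _).ne' (g ω)
  refine integrableOn_triangle ?_ (fun ω hω ↦ ?_) ?_
  · have hg_snd := hg_meas.comp_snd (μ := volume.restrict (Ioo 0 b))
    have hsub : Measurable fun z : ℝ × ℝ ↦ (z.2 - z.1) ^ (r - 1) := by fun_prop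
    have hpow₁ : Measurable fun z : ℝ × ℝ ↦ z.1 ^ (α - 1) := by fun_prop
    have hpow₂ : Measurable fun z : ℝ × ℝ ↦ z.2 ^ r := by fun_prop
    exact hpow₁.aestronglyMeasurable.mul
      ((hsub.aestronglyMeasurable.mul hg_snd).div₀ hpow₂.aestronglyMeasurable)
  · simpa only [IntegrableOn, mul_div_assoc, mul_assoc] using
      (integrableOn_rpow_mul_sub_rpow hα hr hω.1).mul_const (g ω / ω ^ r)
  · refine IntegrableOn.congr_fun (hg.norm.const_mul (beta α r)) (fun ω hω ↦ ?_) measurableSet_Ioo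
    have hnorm : EqOn (fun p ↦ ‖p ^ (α - 1) * ((ω - p) ^ (r - 1) * g ω / ω ^ r)‖)
        (fun p ↦ p ^ (α - 1) * ((ω - p) ^ (r - 1) * |g ω| / ω ^ r)) (Ioo 0 ω) := fun p hp ↦ by
      simp only [norm_mul, norm_div, Real.norm_eq_abs, Real.abs_rpow_of_nonneg hp.1.le,
        Real.abs_rpow_of_nonneg hω.1.le, Real.abs_rpow_of_nonneg (sub_nonneg.2 hp.2.le),
        abs_of_pos hp.1, abs_of_pos hω.1, abs_of_pos (sub_pos.2 hp.2)]
    rw [setIntegral_congr_fun measurableSet_Ioo hnorm,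
      integral_rpow_mul_erdelyiKober_kernel hα hr hω.1, norm_mul, Real.norm_eq_abs (g ω),
      Real.norm_of_nonneg (Real.rpow_nonneg hω.1.le _)]

theorem integrableOn_rpow_mul_erdelyiKober (hα : 0 < α) (hr : 0 < r)
    (hg : IntegrableOn (fun ω ↦ ω ^ (α - 1) * g ω) (Ioo 0 b)) :
    IntegrableOn (fun p ↦ p ^ (α - 1) * erdelyiKober r b g p) (Ioo 0 b) := by
  simpa only [erdelyiKober, integral_const_mul] using integrableOn_integral_of_integrableOn_triangle
    (integrableOn_triangle_erdelyiKober hα hr hg)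

theorem integral_rpow_mul_erdelyiKober (hα : 0 < α) (hr : 0 < r)
    (hg : IntegrableOn (fun ω ↦ ω ^ (α - 1) * g ω) (Ioo 0 b)) :
    ∫ p in Ioo 0 b, p ^ (α - 1) * erdelyiKober r b g p =
      beta α r * ∫ ω in Ioo 0 b, ω ^ (α - 1) * g ω := by
  calc
    _ = ∫ p in Ioo 0 b, ∫ ω in Ioo p b, p ^ (α - 1) * ((ω - p) ^ (r - 1) * g ω / ω ^ r) := by
      simp only [erdelyiKober, integral_const_mul]
    _ = ∫ ω in Ioo 0 b, ∫ p in Ioo 0 ω, p ^ (α - 1) * ((ω - p) ^ (r - 1) * g ω / ω ^ r) :=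
      integral_integral_swap_triangle (integrableOn_triangle_erdelyiKober hα hr hg)
    _ = ∫ ω in Ioo 0 b, beta α r * (ω ^ (α - 1) * g ω) :=
      setIntegral_congr_fun measurableSet_Ioo fun ω hω ↦
        integral_rpow_mul_erdelyiKober_kernel hα hr hω.1 (g ω)
    _ = _ := integral_const_mul _ _

end ErdelyiKober

/-- The Negative Binomial probability mass function, with the count `x` allowed to be real. -/
noncomputable def negBinomialPMF (r p x : ℝ) : ℝ :=
  Real.Gamma (r + x) / (Real.Gamma r * Real.Gamma (x + 1)) * p ^ x * (1 - p) ^ r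

/-- The mixing quasi-density, as a function of `p`, without its factor
`1 / (ζ(s) Γ(s) (1 - p) ^ r)`. -/
noncomputable def zetaMixingNumerator (s r p : ℝ) : ℝ :=
  (s - 1) * erdelyiKober r 1 (fun ω ↦ (-Real.log ω) ^ (s - 2)) p +
    (r - 1) * erdelyiKober r 1 (fun ω ↦ (-Real.log ω) ^ (s - 1)) p

/-- The quasi-density in `p` which mixes the Negative Binomial distributions with fixed `r` into
the Zeta distribution. -/
noncomputable def zetaMixingQuasiDensity (s r p : ℝ) : ℝ :=
  1 / (zetaS s * Real.Gamma s * (1 - p) ^ r) * zetaMixingNumerator s r p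

section Mixture

variable {s r α : ℝ}

theorem integral_rpow_mul_zetaMixingNumerator (hs : 1 < s) (hr : 0 < r) (hα : 0 < α) :
    ∫ p in Ioo 0 1, p ^ (α - 1) * zetaMixingNumerator s r p =
      (α + r - 1) * beta α r * (α ^ (-s) * Real.Gamma s) := by
  have hs0 : 0 < s := one_pos.trans hs
  have hs1 : 0 < s - 1 := sub_pos.2 hs
  have hlog₁ := integrableOn_rpow_mul_neg_log_rpow_s11 hα hs1
  have hlog₂ := integrableOn_rpow_mul_neg_log_rpow_s11 hα hs0
  have hΓ : Real.Gamma s = (s - 1) * Real.Gamma (s - 1) := by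
    simpa only [sub_add_cancel] using Real.Gamma_add_one hs1.ne'
  have hpow : α ^ (-(s - 1)) = α * α ^ (-s) := by
    rw [neg_sub, sub_eq_add_neg, Real.rpow_add hα, Real.rpow_one]
  have hs2 : s - 2 = s - 1 - 1 := by ring
  simp only [zetaMixingNumerator, hs2, mul_add, mul_left_comm (_ ^ (α - 1))]
  rw [integral_add ((integrableOn_rpow_mul_erdelyiKober hα hr hlog₁).const_mul _)
      ((integrableOn_rpow_mul_erdelyiKober hα hr hlog₂).const_mul _),
    integral_const_mul, integral_const_mul, integral_rpow_mul_erdelyiKober hα hr hlog₁,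
    integral_rpow_mul_erdelyiKober hα hr hlog₂, integral_rpow_mul_neg_log_rpow_s11 hα hs1,
    integral_rpow_mul_neg_log_rpow_s11 hα hs0, hpow, hΓ]
  ring

theorem Gamma_div_mul_mul_beta (hr : 0 < r) (hα : 0 < α) (hrα : α + r - 1 ≠ 0) :
    Real.Gamma (α + r - 1) / (Real.Gamma r * Real.Gamma α) * ((α + r - 1) * beta α r) = 1 := by
  have hΓr := (Real.Gamma_pos_of_pos hr).ne'
  have hΓα := (Real.Gamma_pos_of_pos hα).ne'
  have hΓ := (Real.Gamma_pos_of_pos (add_pos hα hr)).ne'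
  have hrec : Real.Gamma (α + r) = (α + r - 1) * Real.Gamma (α + r - 1) := by
    simpa only [sub_add_cancel] using Real.Gamma_add_one hrα
  calc
    _ = (α + r - 1) * Real.Gamma (α + r - 1) / Real.Gamma (α + r) := by
      rw [beta]
      field_simp
    _ = 1 := by rw [← hrec, div_self hΓ]

theorem negBinomialPMF_mul_zetaMixingQuasiDensity {p : ℝ} (hp : p < 1) (x : ℝ) :
    negBinomialPMF r p x * zetaMixingQuasiDensity s r p =
      Real.Gamma (r + x) / (Real.Gamma r * Real.Gamma (x + 1)) / (zetaS s * Real.Gamma s) *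
        (p ^ x * zetaMixingNumerator s r p) := by
  have h : (1 - p) ^ r ≠ 0 := (Real.rpow_pos_of_pos (sub_pos.2 hp) r).ne'
  rw [negBinomialPMF, zetaMixingQuasiDensity, one_div, mul_inv]
  field_simp

end Mixture

-- At the pole `r + x = 0`, `Real.Gamma` takes the junk value `0`.
theorem zeta_as_negBinomial_mixture_r_lt_one_general {s r x : ℝ} (hs : 1 < s) (hr : 0 < r)
    (hx : -1 < x) (hrx : r + x ≠ 0) :
    ∫ p in Ioo 0 1, negBinomialPMF r p x * zetaMixingQuasiDensity s r p =
      (x + 1) ^ (-s) / zetaS s := by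
  have hx1 : 0 < x + 1 := neg_lt_iff_pos_add.1 hx
  have hrx1 : x + 1 + r - 1 = r + x := by ring
  have hmoment := integral_rpow_mul_zetaMixingNumerator hs hr hx1
  have hbeta := Gamma_div_mul_mul_beta hr hx1 (by rwa [hrx1])
  rw [hrx1] at hmoment hbeta
  rw [add_sub_cancel_right] at hmoment
  have hΓs : Real.Gamma s ≠ 0 := (Real.Gamma_pos_of_pos (one_pos.trans hs)).ne'
  rw [setIntegral_congr_fun measurableSet_Ioo fun p hp ↦
      negBinomialPMF_mul_zetaMixingQuasiDensity hp.2 x, integral_const_mul, hmoment,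
    div_mul_eq_mul_div, ← mul_assoc, hbeta, one_mul, mul_div_mul_right _ _ hΓs]

/-- The Zeta(s) pmf is the continuous mixture of Negative Binomial(r,p) pmfs,
for fixed `r ∈ (0,1)`, with mixing quasi-density
`f(p) = (1/(ζ(s)Γ(s)(1-p)^r)) [ (s-1)∫_p^1 (ω-p)^(r-1)(-ln ω)^(s-2)/ω^r dω
 + (r-1)∫_p^1 (ω-p)^(r-1)(-ln ω)^(s-1)/ω^r dω ]`. -/
theorem zeta_as_negBinomial_mixture_r_lt_one (s : ℝ) (hs : 1 < s)
    (r : ℝ) (hr0 : 0 < r) (hr1 : r < 1) (x : ℕ) :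
    ∫ p in Set.Ioo (0 : ℝ) 1,
      (Real.Gamma (r + x) / (Real.Gamma r * Real.Gamma ((x : ℝ) + 1))) *
        p ^ x * (1 - p) ^ r *
        ((1 / (zetaS s * Real.Gamma s * (1 - p) ^ r)) *
          ((s - 1) *
              (∫ ω in Set.Ioo p 1,
                (ω - p) ^ (r - 1) * (-Real.log ω) ^ (s - 2) / ω ^ r) +
            (r - 1) *
              (∫ ω in Set.Ioo p 1,
                (ω - p) ^ (r - 1) * (-Real.log ω) ^ (s - 1) / ω ^ r)))
      = ((x : ℝ) + 1) ^ (-s) / zetaS s := by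
  have hmixture := zeta_as_negBinomial_mixture_r_lt_one_general hs hr0
    (neg_one_lt_zero.trans_le x.cast_nonneg) (by positivity)
  simpa only [negBinomialPMF, zetaMixingQuasiDensity, zetaMixingNumerator, erdelyiKober,
    Real.rpow_natCast] using hmixture
end

section
/- For every real s > 1 and every natural number x, ∫₀^∞ (e^{-λ} λ^x / x!) · f(λ) dλ = (x+1)^(-s)/ζ(s), where f(λ) = (1/(ζ(s)Γ(s))) ∫₀^∞ (ln(y+1))^(s-1) / (y+1) · e^{-λ y} dy. That is, the Zeta(s) probability mass function is the continuous mixture of Poisson(λ) probability mass functions with mixing density f on (0,∞). -/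
open MeasureTheory

/-!
By Fubini and Euler's integral `∫₀^∞ t^(a-1) e^(-rt) dt = Γ(a) r^(-a)`, integrating a Laplace
transform `∫ e^(-ty) g(y) dy` against the Poisson weights `e^(-t) t^n / n!` gives
`∫ (y+1)^(-(n+1)) g(y) dy`. For `g(y) = log(y+1)^(s-1) / (y+1)` the substitution `u = log(y+1)`
turns the latter into `∫₀^∞ u^(s-1) e^(-(n+1)u) du`, which is Euler's integral once more.
-/

open Set

section EulerIntegral

variable {a r : ℝ}

lemma integrableOn_rpow_mul_exp_neg_mul_Ioi (ha : 0 < a) (hr : 0 < r) :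
    IntegrableOn (fun t : ℝ ↦ t ^ (a - 1) * Real.exp (-(r * t))) (Ioi 0) := by
  simpa [neg_mul] using
    integrableOn_rpow_mul_exp_neg_mul_rpow (by linarith : -1 < a - 1) one_pos hr

lemma integral_rpow_mul_exp_neg_mul_Ioi_eq_rpow_neg (ha : 0 < a) (hr : 0 < r) :
    ∫ t in Ioi (0 : ℝ), t ^ (a - 1) * Real.exp (-(r * t)) = r ^ (-a) * Real.Gamma a := by
  rw [Real.integral_rpow_mul_exp_neg_mul_Ioi ha hr, one_div, Real.inv_rpow hr.le,
    Real.rpow_neg hr.le]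

end EulerIntegral

section LaplaceTransform

variable {α E : Type*} [MeasurableSpace α] {μ : Measure α} [NormedAddCommGroup E]
  [NormedSpace ℝ E] {a : ℝ} {φ : α → ℝ} {g : α → E}

lemma aestronglyMeasurable_of_rpow_smul (hφ : AEMeasurable φ μ) (hφ_pos : ∀ᵐ y ∂μ, 0 < φ y)
    (hg : AEStronglyMeasurable (fun y ↦ φ y ^ a • g y) μ) : AEStronglyMeasurable g μ := by
  refine ((hφ.pow_const (-a)).aestronglyMeasurable.smul hg).congr ?_
  filter_upwards [hφ_pos] with y hy
  rw [Pi.smul_apply', smul_smul, ← Real.rpow_add hy, neg_add_cancel, Real.rpow_zero, one_smul]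

variable [SFinite μ]

lemma integrable_prod_rpow_mul_exp_neg_mul_smul (ha : 0 < a) (hφ : AEMeasurable φ μ)
    (hφ_pos : ∀ᵐ y ∂μ, 0 < φ y) (hg : Integrable (fun y ↦ φ y ^ (-a) • g y) μ) :
    Integrable (fun p : ℝ × α ↦ (p.1 ^ (a - 1) * Real.exp (-(φ p.2 * p.1))) • g p.2)
      ((volume.restrict (Ioi 0)).prod μ) := by
  have g_meas : AEStronglyMeasurable g μ := aestronglyMeasurable_of_rpow_smul hφ hφ_pos hg.1
  have kernel_meas : AEMeasurable (fun p : ℝ × α ↦ p.1 ^ (a - 1) * Real.exp (-(φ p.2 * p.1)))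
      ((volume.restrict (Ioi 0)).prod μ) :=
    (measurable_fst.pow_const _).aemeasurable.mul
      (hφ.comp_snd.mul measurable_fst.aemeasurable).neg.exp
  refine (integrable_prod_iff' (kernel_meas.aestronglyMeasurable.smul g_meas.comp_snd)).2
    ⟨?_, ?_⟩
  · filter_upwards [hφ_pos] with y hy
    exact (integrableOn_rpow_mul_exp_neg_mul_Ioi ha hy).smul_const (g y)
  · refine (hg.norm.const_mul (Real.Gamma a)).congr ?_
    filter_upwards [hφ_pos] with y hy
    have norm_eq : ∀ t ∈ Ioi (0 : ℝ), ‖(t ^ (a - 1) * Real.exp (-(φ y * t))) • g y‖ =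
        t ^ (a - 1) * Real.exp (-(φ y * t)) * ‖g y‖ := fun t (ht : 0 < t) ↦ by
      rw [norm_smul, Real.norm_of_nonneg (by positivity)]
    refine Eq.trans ?_ (setIntegral_congr_fun measurableSet_Ioi norm_eq).symm
    rw [integral_mul_const, integral_rpow_mul_exp_neg_mul_Ioi_eq_rpow_neg ha hy, norm_smul,
      Real.norm_of_nonneg (by positivity), mul_left_comm, mul_assoc]

theorem integral_rpow_smul_integral_exp_neg_mul_smul [CompleteSpace E] (ha : 0 < a)
    (hφ : AEMeasurable φ μ) (hφ_pos : ∀ᵐ y ∂μ, 0 < φ y)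
    (hg : Integrable (fun y ↦ φ y ^ (-a) • g y) μ) :
    ∫ t in Ioi (0 : ℝ), t ^ (a - 1) • ∫ y, Real.exp (-(φ y * t)) • g y ∂μ =
      Real.Gamma a • ∫ y, φ y ^ (-a) • g y ∂μ := by
  simp only [← integral_smul, smul_smul]
  rw [integral_integral_swap (integrable_prod_rpow_mul_exp_neg_mul_smul ha hφ hφ_pos hg)]
  refine integral_congr_ae ?_
  filter_upwards [hφ_pos] with y hy
  rw [integral_smul_const, integral_rpow_mul_exp_neg_mul_Ioi_eq_rpow_neg ha hy, mul_comm]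

end LaplaceTransform

theorem integral_poisson_smul_integral_exp_neg_mul_smul {E : Type*} [NormedAddCommGroup E]
    [NormedSpace ℝ E] [CompleteSpace E] {μ : Measure ℝ} [SFinite μ] {g : ℝ → E} (n : ℕ)
    (hμ : ∀ᵐ y ∂μ, -1 < y) (hg : Integrable (fun y ↦ (y + 1) ^ (-((n : ℝ) + 1)) • g y) μ) :
    ∫ t in Ioi (0 : ℝ), (Real.exp (-t) * t ^ n / (n.factorial : ℝ)) •
        ∫ y, Real.exp (-t * y) • g y ∂μ =
      ∫ y, (y + 1) ^ (-((n : ℝ) + 1)) • g y ∂μ := by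
  have absorb_exp (t : ℝ) : (Real.exp (-t) * t ^ n / (n.factorial : ℝ)) •
        ∫ y, Real.exp (-t * y) • g y ∂μ =
      (n.factorial : ℝ)⁻¹ •
        t ^ ((n : ℝ) + 1 - 1) • ∫ y, Real.exp (-((y + 1) * t)) • g y ∂μ := by
    have exp_split (y : ℝ) : Real.exp (-((y + 1) * t)) = Real.exp (-t) * Real.exp (-t * y) := by
      rw [← Real.exp_add]; ring_nf
    simp only [exp_split, mul_smul (Real.exp (-t))]
    rw [integral_smul, smul_smul, smul_smul, add_sub_cancel_right, Real.rpow_natCast]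
    ring_nf
  simp only [absorb_exp]
  rw [integral_smul, integral_rpow_smul_integral_exp_neg_mul_smul (by positivity)
    (by fun_prop) (hμ.mono fun y hy ↦ by linarith) hg, Real.Gamma_nat_eq_factorial,
    inv_smul_smul₀ (by positivity)]

section LogSubstitution

variable {E : Type*} [NormedAddCommGroup E] [NormedSpace ℝ E]

lemma integral_comp_log_add_one_Ioi (g : ℝ → E) :
    ∫ y in Ioi (0 : ℝ), (y + 1)⁻¹ • g (Real.log (y + 1)) = ∫ u in Ioi (0 : ℝ), g u := by
  have shift := (measurePreserving_add_right volume (1 : ℝ)).setIntegral_preimage_emb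
    (measurableEmbedding_addRight 1) (fun z ↦ z⁻¹ • g (Real.log z)) (Ioi 1)
  rwa [preimage_add_const_Ioi, sub_self, integral_comp_log_Ioi g one_pos, Real.log_one] at shift

lemma integrableOn_comp_log_add_one_Ioi (g : ℝ → E) :
    IntegrableOn (fun y ↦ (y + 1)⁻¹ • g (Real.log (y + 1))) (Ioi 0) ↔
      IntegrableOn g (Ioi 0) := by
  have shift := (measurePreserving_add_right volume (1 : ℝ)).integrableOn_comp_preimage
    (measurableEmbedding_addRight 1) (f := fun z ↦ z⁻¹ • g (Real.log z)) (s := Ioi 1)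
  rwa [preimage_add_const_Ioi, sub_self, integrableOn_comp_log_Ioi g one_pos, Real.log_one] at shift

end LogSubstitution

section LogPower

variable {s r : ℝ}

lemma rpow_neg_mul_log_rpow_div_eq {z : ℝ} (hz : 0 < z) :
    z ^ (-r) * (Real.log z ^ (s - 1) / z) =
      z⁻¹ • (Real.log z ^ (s - 1) * Real.exp (-(r * Real.log z))) := by
  rw [Real.rpow_def_of_pos hz, smul_eq_mul]
  ring_nf

lemma integrableOn_add_one_rpow_neg_mul_log_rpow_div (hs : 0 < s) (hr : 0 < r) :
    IntegrableOn (fun y : ℝ ↦ (y + 1) ^ (-r) * (Real.log (y + 1) ^ (s - 1) / (y + 1)))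
      (Ioi 0) :=
  ((integrableOn_comp_log_add_one_Ioi _).2 (integrableOn_rpow_mul_exp_neg_mul_Ioi hs hr)).congr_fun
    (fun y (hy : 0 < y) ↦ (rpow_neg_mul_log_rpow_div_eq (by positivity)).symm) measurableSet_Ioi

lemma integral_add_one_rpow_neg_mul_log_rpow_div (hs : 0 < s) (hr : 0 < r) :
    ∫ y in Ioi (0 : ℝ), (y + 1) ^ (-r) * (Real.log (y + 1) ^ (s - 1) / (y + 1)) =
      r ^ (-s) * Real.Gamma s := by
  rw [← integral_rpow_mul_exp_neg_mul_Ioi_eq_rpow_neg hs hr,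
    ← integral_comp_log_add_one_Ioi (fun u ↦ u ^ (s - 1) * Real.exp (-(r * u)))]
  exact setIntegral_congr_fun measurableSet_Ioi fun y (hy : 0 < y) ↦
    rpow_neg_mul_log_rpow_div_eq (by positivity)

theorem integral_poisson_mul_integral_log_rpow_div_mul_exp (hs : 0 < s) (n : ℕ) :
    ∫ t in Ioi (0 : ℝ), (Real.exp (-t) * t ^ n / (n.factorial : ℝ)) *
        ∫ y in Ioi (0 : ℝ), Real.log (y + 1) ^ (s - 1) / (y + 1) * Real.exp (-t * y) =
      ((n : ℝ) + 1) ^ (-s) * Real.Gamma s := by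
  have n_succ_pos : (0 : ℝ) < n + 1 := by positivity
  simp only [mul_comm (_ / (_ + 1)) (Real.exp _)]
  rw [← integral_add_one_rpow_neg_mul_log_rpow_div hs n_succ_pos]
  exact integral_poisson_smul_integral_exp_neg_mul_smul n
    (ae_restrict_of_forall_mem measurableSet_Ioi fun y (hy : 0 < y) ↦ by linarith)
    (integrableOn_add_one_rpow_neg_mul_log_rpow_div hs n_succ_pos)

end LogPower

/-- The Zeta(s) pmf is the continuous mixture of Poisson(λ) pmfs with mixing
density `f(λ) = (1/(ζ(s)Γ(s))) ∫₀^∞ (ln(y+1))^(s-1)/(y+1) e^{-λy} dy`. -/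
theorem zeta_as_poisson_mixture (s : ℝ) (hs : 1 < s) (x : ℕ) :
    ∫ lam in Set.Ioi (0 : ℝ),
        (Real.exp (-lam) * lam ^ x / (Nat.factorial x : ℝ)) *
          ((1 / (zetaS s * Real.Gamma s)) *
            ∫ y in Set.Ioi (0 : ℝ),
              (Real.log (y + 1)) ^ (s - 1) / (y + 1) * Real.exp (-lam * y))
      = ((x : ℝ) + 1) ^ (-s) / zetaS s := by
  have s_pos : 0 < s := one_pos.trans hs
  simp only [mul_left_comm _ (1 / (zetaS s * Real.Gamma s))]
  rw [integral_const_mul, integral_poisson_mul_integral_log_rpow_div_mul_exp s_pos,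
    one_div_mul_eq_div, mul_div_mul_right _ _ (Real.Gamma_pos_of_pos s_pos).ne']
end

section
/- For every real s > 1, the function f(λ) = (1/(ζ(s)Γ(s))) ∫₀^∞ (ln(y+1))^(s-1) / (y+1) · e^{-λ y} dy is nonnegative on (0,∞) and satisfies ∫₀^∞ f(λ) dλ = 1; i.e., it is a genuine probability density function on (0,∞). -/
open MeasureTheory

/-!
Integrating out `λ` first turns `e^{-λy}` into `1 / y`, so the total mass is
`(ζ(s)Γ(s))⁻¹ ∫₀^∞ (ln(y+1))^(s-1) / (y (y+1)) dy`. The substitution `y = e^t - 1` makes this the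
Bose–Einstein integral `∫₀^∞ t^(s-1) / (e^t - 1) dt`, which is `Γ(s)ζ(s)`: expand
`1 / (e^t - 1) = ∑ e^{-(n+1)t}` and take Mellin transforms term by term.
-/

open Set

section Zeta

variable {s : ℝ}

lemma ofReal_zetaS (hs : 1 < s) : (zetaS s : ℂ) = riemannZeta s := by
  rw [zeta_eq_tsum_one_div_nat_add_one_cpow (by simpa using hs), zetaS, Complex.ofReal_tsum]
  refine tsum_congr fun n => ?_
  rw [Complex.ofReal_cpow (by positivity)]
  push_cast
  rw [Complex.cpow_neg, one_div]

end Zeta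

section BoseEinstein

lemma hasSum_exp_neg_add_one_mul {t : ℝ} (ht : 0 < t) :
    HasSum (fun n : ℕ => Real.exp (-(n + 1) * t)) (Real.exp t - 1)⁻¹ := by
  have geometric := (hasSum_geometric_of_lt_one (Real.exp_pos (-t)).le
    (Real.exp_lt_one_iff.mpr (neg_lt_zero.mpr ht))).mul_left (Real.exp (-t))
  have limit_eq : Real.exp (-t) * (1 - Real.exp (-t))⁻¹ = (Real.exp t - 1)⁻¹ := by
    rw [Real.exp_neg, ← mul_inv, mul_sub, mul_one, mul_inv_cancel₀ (Real.exp_ne_zero t)]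
  rw [limit_eq] at geometric
  refine geometric.congr_fun fun n => ?_
  rw [← Real.exp_nat_mul, ← Real.exp_add]
  ring_nf

lemma mellin_inv_exp_sub_one {s : ℂ} (hs : 1 < s.re) :
    mellin (fun t : ℝ => ((Real.exp t - 1)⁻¹ : ℂ)) s = Complex.Gamma s * riemannZeta s := by
  have expansion : ∀ t ∈ Ioi (0 : ℝ),
      HasSum (fun n : ℕ => 1 * (Real.exp (-(n + 1 : ℝ) * t) : ℂ)) (Real.exp t - 1 : ℂ)⁻¹ := by
    intro t ht
    simpa using Complex.hasSum_ofReal.mpr (hasSum_exp_neg_add_one_mul ht)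
  have summable_coeff : Summable fun n : ℕ => ‖(1 : ℂ)‖ / (n + 1 : ℝ) ^ s.re := by
    refine ((Real.summable_one_div_nat_add_rpow 1 s.re).mpr hs).congr fun n => ?_
    rw [norm_one, abs_of_nonneg (by positivity)]
  have mellin_termwise := hasSum_mellin (fun n : ℕ => Or.inr n.cast_add_one_pos)
    (zero_lt_one.trans hs) expansion summable_coeff
  rw [← mellin_termwise.tsum_eq, zeta_eq_tsum_one_div_nat_add_one_cpow hs, ← tsum_mul_left]
  simp [div_eq_mul_inv]

lemma integral_rpow_mul_inv_exp_sub_one {s : ℝ} (hs : 1 < s) :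
    ∫ t in Ioi (0 : ℝ), t ^ (s - 1) * (Real.exp t - 1)⁻¹ = zetaS s * Real.Gamma s := by
  have mellin_eq := mellin_inv_exp_sub_one (s := s) (by simpa using hs)
  rw [← ofReal_zetaS hs, Complex.Gamma_ofReal, mul_comm, mellin] at mellin_eq
  rw [← Complex.ofReal_inj, ← integral_complex_ofReal, Complex.ofReal_mul, ← mellin_eq]
  refine setIntegral_congr_fun measurableSet_Ioi fun t ht => ?_
  simp [Complex.ofReal_cpow (le_of_lt ht)]

end BoseEinstein

section Substitution

variable {E : Type*} [NormedAddCommGroup E] [NormedSpace ℝ E]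

lemma integral_Ioi_exp_sub_one (g : ℝ → E) (a : ℝ) :
    ∫ y in Ioi (Real.exp a - 1), g y = ∫ t in Ioi a, Real.exp t • g (Real.exp t - 1) := by
  have image_eq : (fun t => Real.exp t - 1) '' Ioi a = Ioi (Real.exp a - 1) := by
    rw [← image_image (· - 1) Real.exp, Real.image_exp_Ioi, image_sub_const_Ioi]
  rw [← image_eq]
  exact integral_image_eq_integral_deriv_smul_of_monotoneOn measurableSet_Ioi
    (fun t _ => ((Real.hasDerivAt_exp t).sub_const 1).hasDerivWithinAt)
    (fun _ _ _ _ h => sub_le_sub_right (Real.exp_le_exp.mpr h) 1) g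

lemma integral_inv_mul_log_add_one_rpow_div {s : ℝ} (hs : 1 < s) :
    ∫ y in Ioi (0 : ℝ), y⁻¹ * (Real.log (y + 1) ^ (s - 1) / (y + 1)) =
      zetaS s * Real.Gamma s := by
  have substitution := integral_Ioi_exp_sub_one
    (fun y => y⁻¹ * (Real.log (y + 1) ^ (s - 1) / (y + 1))) 0
  rw [Real.exp_zero, sub_self] at substitution
  rw [substitution, ← integral_rpow_mul_inv_exp_sub_one hs]
  refine setIntegral_congr_fun measurableSet_Ioi fun t _ => ?_
  simp only [sub_add_cancel, Real.log_exp, smul_eq_mul]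
  field_simp

end Substitution

section Laplace

variable {E : Type*} [NormedAddCommGroup E] [NormedSpace ℝ E]

lemma integrableOn_exp_neg_mul {y : ℝ} (hy : 0 < y) :
    IntegrableOn (fun l : ℝ => Real.exp (-l * y)) (Ioi 0) := by
  simpa [mul_comm] using integrableOn_exp_mul_Ioi (neg_lt_zero.mpr hy) 0

lemma integral_exp_neg_mul {y : ℝ} (hy : 0 < y) :
    ∫ l in Ioi (0 : ℝ), Real.exp (-l * y) = y⁻¹ := by
  simpa [mul_comm] using integral_exp_mul_Ioi (neg_lt_zero.mpr hy) 0

variable {μ : Measure ℝ} [SFinite μ] {g : ℝ → E}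

lemma integrable_exp_neg_mul_smul (hg : IntegrableOn (fun y => y⁻¹ • g y) (Ioi 0) μ) :
    Integrable (Function.uncurry fun l y : ℝ => Real.exp (-l * y) • g y)
      ((volume.restrict (Ioi 0)).prod (μ.restrict (Ioi 0))) := by
  have g_measurable : AEStronglyMeasurable g (μ.restrict (Ioi 0)) := by
    refine (aestronglyMeasurable_id.smul hg.aestronglyMeasurable).congr ?_
    filter_upwards [ae_restrict_mem measurableSet_Ioi] with y hy
    exact smul_inv_smul₀ (ne_of_gt hy) (g y)
  have integrand_measurable : AEStronglyMeasurable
      (Function.uncurry fun l y : ℝ => Real.exp (-l * y) • g y)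
      ((volume.restrict (Ioi 0)).prod (μ.restrict (Ioi 0))) :=
    Continuous.aestronglyMeasurable (by fun_prop) |>.smul g_measurable.comp_snd
  rw [integrable_prod_iff' integrand_measurable]
  constructor
  · filter_upwards [ae_restrict_mem measurableSet_Ioi] with y hy
    exact (integrableOn_exp_neg_mul hy).smul_const (g y)
  · refine hg.norm.congr ?_
    filter_upwards [ae_restrict_mem measurableSet_Ioi] with y hy
    simp only [Function.uncurry_apply_pair, norm_smul, Real.norm_eq_abs, Real.abs_exp]
    rw [integral_mul_const, integral_exp_neg_mul hy, abs_of_pos (inv_pos.mpr hy)]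

lemma integral_integral_exp_neg_mul_smul [CompleteSpace E]
    (hg : IntegrableOn (fun y => y⁻¹ • g y) (Ioi 0) μ) :
    ∫ l in Ioi (0 : ℝ), ∫ y in Ioi (0 : ℝ), Real.exp (-l * y) • g y ∂μ =
      ∫ y in Ioi (0 : ℝ), y⁻¹ • g y ∂μ := by
  rw [integral_integral_swap (integrable_exp_neg_mul_smul hg)]
  refine setIntegral_congr_fun measurableSet_Ioi fun y hy => ?_
  simp only [integral_smul_const, integral_exp_neg_mul hy]

end Laplace

/-- The Poisson mixing density
`f(λ) = (1/(ζ(s)Γ(s))) ∫₀^∞ (ln(y+1))^(s-1)/(y+1) e^{-λy} dy`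
is a genuine probability density on `(0,∞)`. -/
theorem poisson_mixing_density_is_pdf (s : ℝ) (hs : 1 < s) :
    (∀ lam ∈ Set.Ioi (0 : ℝ),
        0 ≤ (1 / (zetaS s * Real.Gamma s)) *
          ∫ y in Set.Ioi (0 : ℝ),
            (Real.log (y + 1)) ^ (s - 1) / (y + 1) * Real.exp (-lam * y)) ∧
    ∫ lam in Set.Ioi (0 : ℝ),
        (1 / (zetaS s * Real.Gamma s)) *
          ∫ y in Set.Ioi (0 : ℝ),
            (Real.log (y + 1)) ^ (s - 1) / (y + 1) * Real.exp (-lam * y)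
      = 1 := by
  have norm_const_pos : 0 < zetaS s * Real.Gamma s :=
    mul_pos (zetaS_pos hs) (Real.Gamma_pos_of_pos (zero_lt_one.trans hs))
  have weight_integral := integral_inv_mul_log_add_one_rpow_div hs
  have weight_integrable : IntegrableOn
      (fun y : ℝ => y⁻¹ • (Real.log (y + 1) ^ (s - 1) / (y + 1))) (Ioi 0) :=
    .of_integral_ne_zero (weight_integral.trans_ne norm_const_pos.ne')
  constructor
  · intro lam _
    refine mul_nonneg (by positivity) (setIntegral_nonneg measurableSet_Ioi fun y hy => ?_)
    have : 0 < y := hy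
    have log_nonneg : 0 ≤ Real.log (y + 1) := Real.log_nonneg (by linarith)
    positivity
  · have total_mass := integral_integral_exp_neg_mul_smul weight_integrable
    simp only [smul_eq_mul, weight_integral] at total_mass
    simp only [mul_comm _ (Real.exp _)]
    rw [integral_const_mul, total_mass, one_div_mul_cancel norm_const_pos.ne']
end

section
/- For every real s > 1, every real r > 1, and every λ > 0, the Gamma-compounded mixing density is invariant in r: ∫₀¹ [((1-p)/p)^r λ^(r-1) / Γ(r)] exp(-((1-p)/p) λ) · [ (r-1)/(ζ(s)Γ(s)(1-p)^r) ∫_p^1 (ω-p)^(r-2) (-ln ω)^(s-1) / ω^(r-1) dω ] dp = (1/(ζ(s)Γ(s))) ∫₀^∞ (ln(y+1))^(s-1) / (y+1) · e^{-λ y} dy, the latter being the value obtained from the case r = 1. -/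
open MeasureTheory

/-!
Under `p = (y + 1)⁻¹` the rate `(1 - p) / p` becomes `y`, and the negative binomial mixing density
of shape `r` becomes, up to the factor `Γ(r) (y + 1) ^ 2 / y ^ r`, a Riemann–Liouville integral of
order `r - 1`. The Gamma density and the Jacobian cancel this factor, leaving `lam ^ (r - 1)` times
the Laplace transform at `lam` of the fractional integral. Since fractional integration of order
`r - 1` multiplies Laplace transforms by `lam ^ (1 - r)`, the shape `r` disappears.
-/

open ProbabilityTheory Set

section InversionSubstitution

variable {E : Type*} [NormedAddCommGroup E] [NormedSpace ℝ E]

lemma setIntegral_image_inv_add_one {S : Set ℝ} (hS : MeasurableSet S) (h_neg_one : -1 ∉ S)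
    (f : ℝ → E) :
    ∫ p in (fun y ↦ (y + 1)⁻¹) '' S, f p = ∫ y in S, ((y + 1) ^ 2)⁻¹ • f (y + 1)⁻¹ := by
  have h_deriv : ∀ y ∈ S, HasDerivWithinAt (fun y ↦ (y + 1)⁻¹) (-((y + 1) ^ 2)⁻¹) S y := by
    intro y hy
    have hy_ne : y + 1 ≠ 0 := fun h ↦ h_neg_one (eq_neg_of_add_eq_zero_left h ▸ hy)
    simpa [neg_div] using (((hasDerivAt_id y).add_const 1).fun_inv hy_ne).hasDerivWithinAt
  have h_inj : InjOn (fun y : ℝ ↦ (y + 1)⁻¹) S := fun _ _ _ _ h ↦ by simpa using h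
  simp only [integral_image_eq_integral_abs_deriv_smul hS h_deriv h_inj, abs_neg, abs_inv, abs_sq]

lemma setIntegral_Ioo_zero_one_eq_Ioi (f : ℝ → E) :
    ∫ p in Ioo 0 1, f p = ∫ y in Ioi (0 : ℝ), ((y + 1) ^ 2)⁻¹ • f (y + 1)⁻¹ := by
  have h_image : (fun y : ℝ ↦ (y + 1)⁻¹) '' Ioi 0 = Ioo 0 1 := by
    rw [← image_image Inv.inv, image_add_const_Ioi, image_inv_eq_inv, zero_add,
      inv_Ioi₀ one_pos, inv_one]
  rw [← h_image, setIntegral_image_inv_add_one measurableSet_Ioi (by simp)]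

lemma setIntegral_Ioo_inv_add_one_one {x : ℝ} (hx : 0 < x) (f : ℝ → E) :
    ∫ ω in Ioo (x + 1)⁻¹ 1, f ω = ∫ y in (0 : ℝ)..x, ((y + 1) ^ 2)⁻¹ • f (y + 1)⁻¹ := by
  have h_image : (fun y : ℝ ↦ (y + 1)⁻¹) '' Ioo 0 x = Ioo (x + 1)⁻¹ 1 := by
    rw [← image_image Inv.inv, image_add_const_Ioo, image_inv_eq_inv, zero_add]
    ext ω
    refine ⟨fun ⟨h₁, h₂⟩ ↦ ?_, fun ⟨h₁, h₂⟩ ↦ ?_⟩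
    · exact ⟨inv_lt_of_inv_lt₀ (inv_pos.1 (one_pos.trans h₁)) h₂, (one_lt_inv_iff₀.1 h₁).2⟩
    · have hω : 0 < ω := (by positivity : 0 < (x + 1)⁻¹).trans h₁
      exact ⟨(one_lt_inv₀ hω).2 h₂, inv_lt_of_inv_lt₀ (by positivity) h₁⟩
  rw [← h_image, setIntegral_image_inv_add_one measurableSet_Ioo (by simp),
    intervalIntegral.integral_of_le hx.le, integral_Ioc_eq_integral_Ioo]

end InversionSubstitution

section FractionalIntegral

variable {E : Type*} [NormedAddCommGroup E] [NormedSpace ℝ E]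

/-- The Riemann–Liouville fractional integral of order `a > 0` with base point `0`. -/
noncomputable def riemannLiouvilleIntegral (a : ℝ) (f : ℝ → E) (x : ℝ) : E :=
  (Real.Gamma a)⁻¹ • ∫ y in (0 : ℝ)..x, (x - y) ^ (a - 1) • f y

theorem integral_exp_neg_mul_smul_riemannLiouvilleIntegral [CompleteSpace E] {a b : ℝ}
    (ha : 0 < a) (hb : 0 < b) {f : ℝ → E}
    (hf : IntegrableOn (fun y ↦ Real.exp (-b * y) • f y) (Ioi 0)) :
    ∫ x in Ioi 0, Real.exp (-b * x) • riemannLiouvilleIntegral a f x =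
      (b ^ a)⁻¹ • ∫ y in Ioi 0, Real.exp (-b * y) • f y := by
  have h_kernel : IntegrableOn
      (fun u : ℝ ↦ (Real.Gamma a)⁻¹ * (u ^ (a - 1) * Real.exp (-b * u))) (Ioi 0) := by
    simpa [IntegrableOn] using (integrableOn_rpow_mul_exp_neg_mul_rpow (s := a - 1) (by linarith)
      one_pos hb).const_mul (Real.Gamma a)⁻¹
  have h_gamma : ∫ u in Ioi (0 : ℝ), (Real.Gamma a)⁻¹ * (u ^ (a - 1) * Real.exp (-b * u)) =
      (b ^ a)⁻¹ := by
    simp only [neg_mul, integral_const_mul, Real.integral_rpow_mul_exp_neg_mul_Ioi ha hb, one_div,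
      Real.inv_rpow hb.le]
    field_simp [(Real.Gamma_pos_of_pos ha).ne']
  have h_split (x y : ℝ) : Real.exp (-b * x) • (Real.Gamma a)⁻¹ • (x - y) ^ (a - 1) • f y =
      ((Real.Gamma a)⁻¹ * ((x - y) ^ (a - 1) * Real.exp (-b * (x - y)))) •
        Real.exp (-b * y) • f y := by
    have h_exp : Real.exp (-b * x) = Real.exp (-b * (x - y)) * Real.exp (-b * y) := by
      rw [← Real.exp_add]
      ring_nf
    simp only [smul_smul, h_exp]
    ring_nf
  simp_rw [riemannLiouvilleIntegral, ← intervalIntegral.integral_smul, h_split, ← h_gamma]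
  exact integral_posConvolution hf h_kernel (ContinuousLinearMap.lsmul ℝ ℝ).flip

end FractionalIntegral

/-- The mixing density in `p` that represents, as a mixture of negative binomial distributions of
fixed shape `r > 1` with weights `Γ(x + r) / (Γ(r) x!) * p ^ x * (1 - p) ^ r`, the distribution on
`ℕ` whose probability at `x` is the moment `∫ ω in Ioo 0 1, ω ^ x * g ω`. The Zeta distribution is
the case where `g ω` is proportional to `(-log ω) ^ (s - 1)`. -/
noncomputable def negBinomialMixingDensity (r : ℝ) (g : ℝ → ℝ) (p : ℝ) : ℝ :=
  (r - 1) / (1 - p) ^ r * ∫ ω in Ioo p 1, (ω - p) ^ (r - 2) * g ω / ω ^ (r - 1)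

lemma setIntegral_Ioo_inv_add_one_one_sub_rpow_mul_div_rpow (r : ℝ) (g : ℝ → ℝ) {x : ℝ}
    (hx : 0 < x) :
    ∫ ω in Ioo (x + 1)⁻¹ 1, (ω - (x + 1)⁻¹) ^ (r - 2) * g ω / ω ^ (r - 1) =
      (x + 1) ^ (2 - r) * ∫ y in (0 : ℝ)..x, (x - y) ^ (r - 2) * (g (y + 1)⁻¹ / (y + 1)) := by
  rw [setIntegral_Ioo_inv_add_one_one hx, ← intervalIntegral.integral_const_mul]
  refine intervalIntegral.integral_congr_uIoo fun y hy ↦ ?_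
  obtain ⟨hy₀, hyx⟩ := uIoo_of_lt hx ▸ hy
  have hx₁ : 0 < x + 1 := by positivity
  have hy₁ : 0 < y + 1 := by positivity
  have h_sub : (y + 1)⁻¹ - (x + 1)⁻¹ = (x - y) / ((x + 1) * (y + 1)) := by
    field_simp
    ring
  rw [smul_eq_mul, h_sub, Real.div_rpow (sub_pos.2 hyx).le (by positivity),
    Real.mul_rpow hx₁.le hy₁.le, Real.inv_rpow hy₁.le, show r - 1 = (r - 2) + 1 by ring,
    Real.rpow_add_one hy₁.ne', show 2 - r = -(r - 2) by ring, Real.rpow_neg hx₁.le]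
  field_simp

lemma negBinomialMixingDensity_inv_add_one {r x : ℝ} (hr : 1 < r) (hx : 0 < x) (g : ℝ → ℝ) :
    negBinomialMixingDensity r g (x + 1)⁻¹ =
      Real.Gamma r * (x + 1) ^ 2 / x ^ r *
        riemannLiouvilleIntegral (r - 1) (fun y ↦ g (y + 1)⁻¹ / (y + 1)) x := by
  have hx₁ : 0 < x + 1 := by positivity
  have hr₁ : 0 < r - 1 := sub_pos.2 hr
  have h_Gamma : Real.Gamma r = (r - 1) * Real.Gamma (r - 1) := by
    simpa using Real.Gamma_add_one hr₁.ne'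
  have h_one_sub : 1 - (x + 1)⁻¹ = x / (x + 1) := by
    field_simp
    ring
  rw [negBinomialMixingDensity, setIntegral_Ioo_inv_add_one_one_sub_rpow_mul_div_rpow r g hx,
    riemannLiouvilleIntegral, h_Gamma, h_one_sub, Real.div_rpow hx.le hx₁.le, Real.rpow_sub hx₁,
    Real.rpow_two, show r - 1 - 1 = r - 2 by ring]
  simp only [smul_eq_mul]
  field_simp [(Real.Gamma_pos_of_pos hr₁).ne']

theorem integral_gammaPDFReal_mul_negBinomialMixingDensity {r lam : ℝ} (hr : 1 < r)
    (hlam : 0 < lam) {g : ℝ → ℝ}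
    (hg : IntegrableOn (fun y ↦ Real.exp (-lam * y) * (g (y + 1)⁻¹ / (y + 1))) (Ioi 0)) :
    ∫ p in Ioo 0 1, gammaPDFReal r ((1 - p) / p) lam * negBinomialMixingDensity r g p =
      ∫ y in Ioi 0, Real.exp (-lam * y) * (g (y + 1)⁻¹ / (y + 1)) := by
  have h_integrand : ∀ x ∈ Ioi (0 : ℝ),
      ((x + 1) ^ 2)⁻¹ • (gammaPDFReal r ((1 - (x + 1)⁻¹) / (x + 1)⁻¹) lam *
        negBinomialMixingDensity r g (x + 1)⁻¹) =
      lam ^ (r - 1) * (Real.exp (-lam * x) •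
        riemannLiouvilleIntegral (r - 1) (fun y ↦ g (y + 1)⁻¹ / (y + 1)) x) := by
    intro x (hx : 0 < x)
    have h_rate : (1 - (x + 1)⁻¹) / (x + 1)⁻¹ = x := by
      field_simp
      ring
    rw [h_rate, negBinomialMixingDensity_inv_add_one hr hx, gammaPDFReal, if_pos hlam.le,
      neg_mul, mul_comm x lam, smul_eq_mul, smul_eq_mul]
    field_simp [(Real.Gamma_pos_of_pos (one_pos.trans hr)).ne']
  rw [setIntegral_Ioo_zero_one_eq_Ioi, setIntegral_congr_fun measurableSet_Ioi h_integrand,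
    integral_const_mul,
    integral_exp_neg_mul_smul_riemannLiouvilleIntegral (sub_pos.2 hr) hlam hg, smul_eq_mul,
    mul_inv_cancel_left₀ (Real.rpow_pos_of_pos hlam _).ne']
  simp only [smul_eq_mul]

lemma integrableOn_exp_neg_mul_mul_log_rpow_div {a b : ℝ} (ha : 0 ≤ a) (hb : 0 < b) :
    IntegrableOn (fun y ↦ Real.exp (-b * y) * (Real.log (y + 1) ^ a / (y + 1))) (Ioi 0) := by
  have h_dominating : IntegrableOn (fun y : ℝ ↦ Real.exp (-b * y) * y ^ a) (Ioi 0) := by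
    simpa [mul_comm] using
      integrableOn_rpow_mul_exp_neg_mul_rpow (s := a) (by linarith) one_pos hb
  refine h_dominating.mono' (by fun_prop) ?_
  filter_upwards [ae_restrict_mem measurableSet_Ioi] with y (hy : 0 < y)
  have h_log_nonneg : 0 ≤ Real.log (y + 1) := Real.log_nonneg (by linarith)
  have h_log_le : Real.log (y + 1) ≤ y := by
    simpa using Real.log_le_sub_one_of_pos (show 0 < y + 1 by positivity)
  rw [Real.norm_of_nonneg (by positivity)]
  gcongr
  calc Real.log (y + 1) ^ a / (y + 1)
    _ ≤ Real.log (y + 1) ^ a := div_le_self (by positivity) (by linarith)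
    _ ≤ y ^ a := by gcongr

/-- Compounding the Gamma(r, (1-p)/p) density over the Negative Binomial mixing
density (fixed shape `r > 1`) yields a Poisson mixing density that is invariant
in `r`: it equals the value obtained from the case `r = 1`. -/
theorem gamma_compounded_mixing_density_invariant (s : ℝ) (hs : 1 < s)
    (r : ℝ) (hr : 1 < r) (lam : ℝ) (hlam : 0 < lam) :
    ∫ p in Set.Ioo (0 : ℝ) 1,
        (((1 - p) / p) ^ r * lam ^ (r - 1) / Real.Gamma r) *
            Real.exp (-((1 - p) / p) * lam) *
          ((r - 1) / (zetaS s * Real.Gamma s * (1 - p) ^ r) *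
            ∫ ω in Set.Ioo p 1,
              (ω - p) ^ (r - 2) * (-Real.log ω) ^ (s - 1) / ω ^ (r - 1))
      = (1 / (zetaS s * Real.Gamma s)) *
          ∫ y in Set.Ioi (0 : ℝ),
            (Real.log (y + 1)) ^ (s - 1) / (y + 1) * Real.exp (-lam * y) := by
  have hg : IntegrableOn (fun y ↦ Real.exp (-lam * y) *
      ((-Real.log (y + 1)⁻¹) ^ (s - 1) / (y + 1))) (Ioi 0) := by
    simpa only [Real.log_inv, neg_neg] using
      integrableOn_exp_neg_mul_mul_log_rpow_div (sub_nonneg.2 hs.le) hlam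
  have h_compound := integral_gammaPDFReal_mul_negBinomialMixingDensity
    (g := fun ω ↦ (-Real.log ω) ^ (s - 1)) hr hlam hg
  simp only [Real.log_inv, neg_neg] at h_compound
  simp only [mul_comm _ (Real.exp (-lam * _))]
  rw [← h_compound, ← integral_const_mul]
  congr 1 with p
  rw [gammaPDFReal, if_pos hlam.le, negBinomialMixingDensity]
  ring_nf
end
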